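/- arXiv:1402.4444 — 2 statements merged into one kernel-verified Lean document; each statement's English description precedes it below -/
import Mathlib

section
/- Let n ≥ 1 and let M be a skew-symmetric 2n×2n real matrix. For every odd exponent k = 2j+1 (j ≥ 0), the matrix power M^k is again skew-symmetric and its Pfaffian satisfies Pf(M^{2j+1}) = (−1)^{jn} · (Pf M)^{2j+1}. (In particular Pf(M^k) = (Pf M)^k whenever k ≡ 1 mod 4.) -/
/-!
The Pfaffian sum transforms under congruence by `Pf (A X Aᵀ) = det A · Pf X`, for every `X`
(`Pf_congr`): expanding the entries of `A X Aᵀ` and summing over permutations first leaves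
determinants of column selections of `A`, from each of which `det A` factors.

Congruence also gives `Pf M ^ 2 = det M` for skew-symmetric `M` (`Pf_sq`). If `M` is singular,
it is congruent to a matrix with a zero row and column, so `Pf M = 0`. Otherwise it has a
symplectic basis, `A M Aᵀ = J` with `J` the standard symplectic matrix, and `det J = Pf J = 1`.

As `(M ^ j)ᵀ = (-1) ^ j M ^ j`, the odd power is `M ^ (2j+1) = (-1) ^ j M ^ j M (M ^ j)ᵀ`. Its
Pfaffian is therefore `(-1) ^ (jn) (det M) ^ j Pf M = (-1) ^ (jn) (Pf M) ^ (2j+1)`.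

The counting takes place on `Fin n × Fin 2`, where the pairs `2i - 1, 2i` are explicit.
-/

noncomputable section

open Matrix

/-- The Pfaffian of a `2n × 2n` real matrix:
`Pf M = (1/(2^n n!)) Σ_{σ ∈ S_{2n}} sgn σ ∏_{i=1}^{n} M_{σ(2i-1) σ(2i)}`. -/
def Pf (n : ℕ) (M : Matrix (Fin (2 * n)) (Fin (2 * n)) ℝ) : ℝ :=
  (1 / (2 ^ n * (n.factorial : ℝ))) *
    ∑ σ : Equiv.Perm (Fin (2 * n)),
      ((Equiv.Perm.sign σ : ℤ) : ℝ) *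
        ∏ i : Fin n, M (σ ⟨2 * i.1, by omega⟩) (σ ⟨2 * i.1 + 1, by omega⟩)

/-! ### Pfaffian sums under congruence -/

/-- The Pfaffian sum without its normalising factor `1 / (2^n n!)`, with rows and columns
indexed by `Fin n × Fin 2`: the pair `(i, 0), (i, 1)` plays the role of `2i - 1, 2i`.
Skew-symmetry is not required. -/
def pfSum (n : ℕ) (M : Matrix (Fin n × Fin 2) (Fin n × Fin 2) ℝ) : ℝ :=
  ∑ σ : Equiv.Perm (Fin n × Fin 2), ((Equiv.Perm.sign σ : ℤ) : ℝ) *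
    ∏ i : Fin n, M (σ (i, 0)) (σ (i, 1))

/-- Expansion of the congruence `A X Aᵀ` over all choices `g` of pairs of summation indices;
the signed sum over permutations becomes the determinant of a column selection of `A`. -/
lemma pfSum_expand (n : ℕ) (A X : Matrix (Fin n × Fin 2) (Fin n × Fin 2) ℝ) :
    pfSum n (A * X * Aᵀ) = ∑ g : Fin n → (Fin n × Fin 2) × (Fin n × Fin 2),
      (∏ i, X (g i).1 (g i).2) *
        (A.submatrix id (fun p : Fin n × Fin 2 =>
          if p.2 = 0 then (g p.1).1 else (g p.1).2)).det := by
  have entry : ∀ s t, (A * X * Aᵀ) s t =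
      ∑ q : (Fin n × Fin 2) × (Fin n × Fin 2), X q.1 q.2 * (A s q.1 * A t q.2) := by
    intro s t
    rw [Fintype.sum_prod_type, Finset.sum_comm]
    simp only [Matrix.mul_apply, Matrix.transpose_apply, Finset.sum_mul]
    refine Finset.sum_congr rfl fun _ _ => Finset.sum_congr rfl fun _ _ => ?_
    ring
  unfold pfSum
  simp only [entry, Fintype.prod_sum, Finset.mul_sum, Matrix.det_apply']
  rw [Finset.sum_comm]
  refine Finset.sum_congr rfl fun g _ => Finset.sum_congr rfl fun σ _ => ?_
  rw [Finset.prod_mul_distrib, Fintype.prod_prod_type]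
  simp only [Fin.prod_univ_two, Matrix.submatrix_apply, id]
  simp only [if_true, one_ne_zero, if_false]
  ring

/-- A column selection of `A` is `A` times the same selection of the identity, so `det A`
factors out of every term of `pfSum_expand`. -/
lemma pfSum_congr (n : ℕ) (A X : Matrix (Fin n × Fin 2) (Fin n × Fin 2) ℝ) :
    pfSum n (A * X * Aᵀ) = A.det * pfSum n X := by
  have h1 : pfSum n X = pfSum n (1 * X * (1 : Matrix (Fin n × Fin 2) (Fin n × Fin 2) ℝ)ᵀ) := by
    simp
  rw [h1, pfSum_expand, pfSum_expand, Finset.mul_sum]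
  refine Finset.sum_congr rfl fun g _ => ?_
  set h : Fin n × Fin 2 → Fin n × Fin 2 :=
    fun p => if p.2 = 0 then (g p.1).1 else (g p.1).2
  have h2 : A.submatrix id h = A * (1 : Matrix (Fin n × Fin 2) (Fin n × Fin 2) ℝ).submatrix id h := by
    have := Matrix.mul_submatrix_one (Equiv.refl (Fin n × Fin 2)) h A
    simpa using this.symm
  rw [h2, Matrix.det_mul]
  ring

/-! ### The standard symplectic matrix -/

/-- The upper triangular half of the standard symplectic matrix: `n` diagonal blocks
`[[0, 1], [0, 0]]`. -/
def halfJ (n : ℕ) : Matrix (Fin n × Fin 2) (Fin n × Fin 2) ℝ :=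
  kroneckerMap (fun a b => a * b) (1 : Matrix (Fin n) (Fin n) ℝ) !![0, 1; 0, 0]

/-- The standard symplectic matrix: `n` diagonal blocks `[[0, 1], [-1, 0]]`. -/
def stdJ (n : ℕ) : Matrix (Fin n × Fin 2) (Fin n × Fin 2) ℝ :=
  kroneckerMap (fun a b => a * b) (1 : Matrix (Fin n) (Fin n) ℝ) !![0, 1; -1, 0]

lemma det_stdJ (n : ℕ) : (stdJ n).det = 1 := by
  unfold stdJ
  rw [Matrix.det_kronecker]
  simp [Matrix.det_fin_two]

/-- Only permutations moving the pairs as blocks, without flipping any of them, contribute,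
and these are even. -/
lemma pfSum_halfJ (n : ℕ) : pfSum n (halfJ n) = n.factorial := by
  have key : ∀ a b : Fin n × Fin 2, halfJ n a b ≠ 0 → a.1 = b.1 ∧ a.2 = 0 ∧ b.2 = 1 := by
    rintro ⟨i, a⟩ ⟨j, b⟩ h
    by_cases hij : i = j <;> fin_cases a <;> fin_cases b <;>
      simp_all [halfJ]
  have hsum : ∑ _τ : Equiv.Perm (Fin n), (1 : ℝ) = pfSum n (halfJ n) := by
    unfold pfSum
    refine Fintype.sum_of_injective
      (fun τ : Equiv.Perm (Fin n) =>
        (Equiv.prodCongrLeft (fun _ : Fin 2 => τ) : Equiv.Perm (Fin n × Fin 2)))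
      ?_ _ _ ?_ ?_
    · intro τ τ₁ h
      ext i
      have := congrArg (fun e : Equiv.Perm (Fin n × Fin 2) => (e (i, 0)).1) h
      simpa using congrArg Fin.val this
    · intro σ hσ
      by_contra hne
      apply hσ
      have hall : ∀ i, halfJ n (σ (i, 0)) (σ (i, 1)) ≠ 0 := by
        intro i h0
        exact hne (by rw [Finset.prod_eq_zero (Finset.mem_univ i) h0, mul_zero])
      have hinj : Function.Injective (fun i => (σ (i, 0)).1) := by
        intro i j hij
        have : σ (i, 0) = σ (j, 0) :=
          Prod.ext hij ((key _ _ (hall i)).2.1.trans (key _ _ (hall j)).2.1.symm)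
        simpa using σ.injective this
      refine ⟨Equiv.ofBijective _ (Finite.injective_iff_bijective.mp hinj), ?_⟩
      ext1 ⟨i, b⟩
      obtain ⟨h1, h2, h3⟩ := key _ _ (hall i)
      fin_cases b
      · exact Prod.ext rfl h2.symm
      · exact Prod.ext h1 h3.symm
    · intro τ
      have hs : Equiv.Perm.sign (Equiv.prodCongrLeft (fun _ : Fin 2 => τ) :
          Equiv.Perm (Fin n × Fin 2)) = 1 := by
        rw [Equiv.Perm.sign_prodCongrLeft]
        simp
      rw [hs]
      simp [halfJ]
  rw [← hsum]
  simp [Fintype.card_perm]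

/-- Each pair contributes the two orderings of its block. Flipping the pairs in a set `t`
is a permutation of sign `(-1)^|t|`, which cancels the sign in the expansion of
`J = E - Eᵀ`, so all `2^n` terms equal the sum for `E`. -/
lemma pfSum_stdJ (n : ℕ) : pfSum n (stdJ n) = 2 ^ n * n.factorial := by
  have hJ : ∀ a b, stdJ n a b = halfJ n a b - halfJ n b a := by
    rintro ⟨i, a⟩ ⟨j, b⟩
    by_cases hij : i = j
    · subst hij
      fin_cases a <;> fin_cases b <;> simp [stdJ, halfJ]
    · simp [stdJ, halfJ, hij, Ne.symm hij]
  have hterm : ∀ t : Finset (Fin n), ∑ σ : Equiv.Perm (Fin n × Fin 2),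
      ((Equiv.Perm.sign σ : ℤ) : ℝ) *
        (((-1) ^ t.card * ∏ i ∈ Finset.univ \ t, halfJ n (σ (i, 0)) (σ (i, 1))) *
          ∏ i ∈ t, halfJ n (σ (i, 1)) (σ (i, 0))) = pfSum n (halfJ n) := by
    intro t
    set ρ : Equiv.Perm (Fin n × Fin 2) :=
      Equiv.prodCongrRight (fun i => if i ∈ t then Equiv.swap 0 1 else 1) with hρ
    have hsign : Equiv.Perm.sign ρ = (-1) ^ t.card := by
      rw [hρ, Equiv.Perm.sign_prodCongrRight]
      simp only [apply_ite Equiv.Perm.sign, Equiv.Perm.sign_one]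
      simp
    unfold pfSum
    rw [← Equiv.sum_comp (Equiv.mulRight ρ) (fun σ : Equiv.Perm (Fin n × Fin 2) =>
      ((Equiv.Perm.sign σ : ℤ) : ℝ) * ∏ i : Fin n, halfJ n (σ (i, 0)) (σ (i, 1)))]
    refine Finset.sum_congr rfl fun σ _ => ?_
    rw [← Finset.prod_sdiff (Finset.subset_univ t)]
    have e1 : ∏ i ∈ Finset.univ \ t, halfJ n ((Equiv.mulRight ρ σ) (i, 0))
        ((Equiv.mulRight ρ σ) (i, 1)) =
        ∏ i ∈ Finset.univ \ t, halfJ n (σ (i, 0)) (σ (i, 1)) := by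
      refine Finset.prod_congr rfl fun i hi => ?_
      have : i ∉ t := (Finset.mem_sdiff.mp hi).2
      simp [hρ, this]
    have e2 : ∏ i ∈ t, halfJ n ((Equiv.mulRight ρ σ) (i, 0)) ((Equiv.mulRight ρ σ) (i, 1)) =
        ∏ i ∈ t, halfJ n (σ (i, 1)) (σ (i, 0)) := by
      refine Finset.prod_congr rfl fun i hi => ?_
      simp [hρ, hi]
    rw [e1, e2]
    simp only [Equiv.coe_mulRight, Equiv.Perm.sign_mul, hsign]
    push_cast
    ring
  rw [← pfSum_halfJ]
  conv_lhs => unfold pfSum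
  simp only [hJ, Finset.prod_sub, Finset.mul_sum]
  rw [Finset.sum_comm, Finset.sum_congr rfl (fun t _ => hterm t)]
  simp

/-! ### The square of the Pfaffian sum -/

/-- A null vector placed in a row of an invertible matrix gives a congruent matrix with a zero
row; by skew-symmetry the corresponding column vanishes too. -/
lemma pfSum_of_det_eq_zero (n : ℕ) (N : Matrix (Fin n × Fin 2) (Fin n × Fin 2) ℝ)
    (hN : Nᵀ = -N) (hd : N.det = 0) : pfSum n N = 0 := by
  obtain ⟨v, hv, hNv⟩ := Matrix.exists_mulVec_eq_zero_iff.mpr hd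
  obtain ⟨k, hk⟩ := Function.ne_iff.mp hv
  set A : Matrix (Fin n × Fin 2) (Fin n × Fin 2) ℝ := (updateCol 1 k v)ᵀ with hA
  have hdet : A.det = v k := by
    rw [hA, Matrix.det_transpose, ← Matrix.cramer_apply, Matrix.cramer_one]
    rfl
  have hcol : ∀ a, (A * N * Aᵀ) a k = 0 := by
    intro a
    have : (A * N * Aᵀ) a k = (A *ᵥ (N *ᵥ v)) a := by
      rw [Matrix.mulVec_mulVec, Matrix.mul_apply]
      simp [Matrix.mulVec, dotProduct, hA]
    rw [this, hNv]
    simp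
  have hskew : (A * N * Aᵀ)ᵀ = -(A * N * Aᵀ) := by
    simp [Matrix.transpose_mul, hN, Matrix.mul_assoc]
  have hrow : ∀ a, (A * N * Aᵀ) k a = 0 := by
    intro a
    have := congrFun (congrFun hskew a) k
    rw [Matrix.transpose_apply, Matrix.neg_apply, hcol] at this
    simpa using this
  have hz : pfSum n (A * N * Aᵀ) = 0 := by
    unfold pfSum
    refine Finset.sum_eq_zero fun σ _ => ?_
    obtain ⟨⟨i, b⟩, hib⟩ := σ.surjective k
    refine mul_eq_zero_of_right _ (Finset.prod_eq_zero (Finset.mem_univ i) ?_)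
    fin_cases b
    · have : σ (i, 0) = k := hib
      rw [this, hrow]
    · have : σ (i, 1) = k := hib
      rw [this, hcol]
  rw [pfSum_congr, hdet] at hz
  exact (mul_eq_zero.mp hz).resolve_left hk

/-- Symplectic Gram-Schmidt: a nondegenerate alternating form in dimension `2n` admits, for each
`k ≤ n`, `k` pairwise orthogonal hyperbolic pairs `x i, y i`. The sequences are indexed by `ℕ`,
and only their first `k` terms matter. -/
lemma exists_hyperbolic (n : ℕ) (B : LinearMap.BilinForm ℝ (Fin n × Fin 2 → ℝ))
    (halt : ∀ u v, B u v = - B v u) (hnd : ∀ u, u ≠ 0 → ∃ v, B u v ≠ 0) (k : ℕ) (hk : k ≤ n) :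
    ∃ x y : ℕ → (Fin n × Fin 2 → ℝ), ∀ i < k, ∀ j < k,
      B (x i) (x j) = 0 ∧ B (y i) (y j) = 0 ∧ B (x i) (y j) = if i = j then 1 else 0 := by
  induction k with
  | zero => exact ⟨0, 0, by simp⟩
  | succ k ih =>
    obtain ⟨x, y, h⟩ := ih (by omega)
    have self : ∀ u, B u u = 0 := fun u => by linarith [halt u u]
    -- There are `2k < 2n` linear conditions for being orthogonal to the first `k` pairs.
    obtain ⟨z, hz0, hz⟩ : ∃ z, z ≠ 0 ∧ ∀ i < k, B (x i) z = 0 ∧ B (y i) z = 0 := by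
      let f : (Fin n × Fin 2 → ℝ) →ₗ[ℝ] (Fin k × Fin 2 → ℝ) :=
        LinearMap.pi fun p => if p.2 = 0 then B (x p.1) else B (y p.1)
      have hf : LinearMap.ker f ≠ ⊥ := by
        apply LinearMap.ker_ne_bot_of_finrank_lt
        simp
        omega
      obtain ⟨z, hz, hz0⟩ := Submodule.exists_mem_ne_zero_of_ne_bot hf
      refine ⟨z, hz0, fun i hi => ⟨?_, ?_⟩⟩
      · simpa [f] using congrFun (LinearMap.mem_ker.mp hz) (⟨i, hi⟩, 0)
      · simpa [f] using congrFun (LinearMap.mem_ker.mp hz) (⟨i, hi⟩, 1)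
    obtain ⟨w, hw⟩ := hnd z hz0
    obtain ⟨w₁, hw₁⟩ : ∃ w₁, B z w₁ = 1 := ⟨(B z w)⁻¹ • w, by simp [hw]⟩
    -- Project `w₁` to the orthogonal complement of the first `k` pairs.
    set w₂ := w₁ - ∑ i ∈ Finset.range k, B (x i) w₁ • y i
      + ∑ i ∈ Finset.range k, B (y i) w₁ • x i with hw₂
    have hxw : ∀ j < k, B (x j) w₂ = 0 := by
      intro j hj
      have e1 : ∑ i ∈ Finset.range k, B (x i) w₁ * B (x j) (y i) = B (x j) w₁ := by
        rw [Finset.sum_eq_single_of_mem j (Finset.mem_range.mpr hj)]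
        · simp [(h j hj j hj).2.2]
        · intro i hi hij
          simp [(h j hj i (Finset.mem_range.mp hi)).2.2, Ne.symm hij]
      have e2 : ∑ i ∈ Finset.range k, B (y i) w₁ * B (x j) (x i) = 0 :=
        Finset.sum_eq_zero fun i hi => by simp [(h j hj i (Finset.mem_range.mp hi)).1]
      simp [hw₂, map_add, map_sub, map_sum, e1, e2]
    have hyw : ∀ j < k, B (y j) w₂ = 0 := by
      intro j hj
      have e1 : ∑ i ∈ Finset.range k, B (y i) w₁ * B (y j) (x i) = - B (y j) w₁ := by
        rw [Finset.sum_eq_single_of_mem j (Finset.mem_range.mpr hj)]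
        · simp [halt (y j), (h j hj j hj).2.2]
        · intro i hi hij
          simp [halt (y j), (h i (Finset.mem_range.mp hi) j hj).2.2, hij]
      have e2 : ∑ i ∈ Finset.range k, B (x i) w₁ * B (y j) (y i) = 0 :=
        Finset.sum_eq_zero fun i hi => by simp [(h j hj i (Finset.mem_range.mp hi)).2.1]
      simp [hw₂, map_add, map_sub, map_sum, e1, e2]
    have hzw : B z w₂ = 1 := by
      have e1 : ∑ i ∈ Finset.range k, B (x i) w₁ * B z (y i) = 0 :=
        Finset.sum_eq_zero fun i hi => by
          rw [halt z, (hz i (Finset.mem_range.mp hi)).2]; simp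
      have e2 : ∑ i ∈ Finset.range k, B (y i) w₁ * B z (x i) = 0 :=
        Finset.sum_eq_zero fun i hi => by
          rw [halt z, (hz i (Finset.mem_range.mp hi)).1]; simp
      simp [hw₂, map_add, map_sub, map_sum, e1, e2, hw₁]
    clear_value w₂
    refine ⟨Function.update x k z, Function.update y k w₂, fun i hi j hj => ?_⟩
    rcases Nat.lt_succ_iff_lt_or_eq.mp hi with hi | rfl <;>
      rcases Nat.lt_succ_iff_lt_or_eq.mp hj with hj | rfl
    · simpa [hi.ne, hj.ne] using h i hi j hj
    · simp [hi.ne, hz i hi, hxw i hi, hyw i hi]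
    · have a1 := halt z (x j)
      have a2 := halt w₂ (y j)
      have a3 := halt z (y j)
      rw [(hz j hj).1] at a1
      rw [hyw j hj] at a2
      rw [(hz j hj).2] at a3
      simp [hj.ne, hj.ne', a1, a2, a3]
    · simp [self, hzw]

/-- A nonsingular skew-symmetric matrix is congruent to `stdJ n`: the rows of `A` form a
symplectic basis for the bilinear form of `N`. -/
lemma exists_congr_stdJ (n : ℕ) (N : Matrix (Fin n × Fin 2) (Fin n × Fin 2) ℝ)
    (hN : Nᵀ = -N) (hd : N.det ≠ 0) :
    ∃ A : Matrix (Fin n × Fin 2) (Fin n × Fin 2) ℝ, A * N * Aᵀ = stdJ n := by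
  have hB : ∀ u v, Matrix.toBilin' N u v = u ⬝ᵥ N *ᵥ v := Matrix.toBilin'_apply' N
  have hsk : ∀ u v, u ⬝ᵥ N *ᵥ v = - ((N *ᵥ u) ⬝ᵥ v) := by
    intro u v
    rw [Matrix.dotProduct_mulVec, ← Matrix.mulVec_transpose, hN, Matrix.neg_mulVec,
      neg_dotProduct]
  have halt : ∀ u v, Matrix.toBilin' N u v = - Matrix.toBilin' N v u := by
    intro u v
    rw [hB, hB, hsk, dotProduct_comm]
  have hnd : ∀ u, u ≠ 0 → ∃ v, Matrix.toBilin' N u v ≠ 0 := by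
    intro u hu
    refine ⟨N *ᵥ u, ?_⟩
    rw [hB, hsk, neg_ne_zero, Ne, dotProduct_self_eq_zero]
    intro h0
    exact hd (Matrix.exists_mulVec_eq_zero_iff.mp ⟨u, hu, h0⟩)
  obtain ⟨x, y, h⟩ := exists_hyperbolic n _ halt hnd n le_rfl
  set A : Matrix (Fin n × Fin 2) (Fin n × Fin 2) ℝ :=
    Matrix.of fun p => if p.2 = 0 then x p.1 else y p.1 with hA
  refine ⟨A, ?_⟩
  have hent : ∀ p q, (A * N * Aᵀ) p q = Matrix.toBilin' N (A p) (A q) := by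
    intro p q
    rw [hB, Matrix.dotProduct_mulVec]
    rfl
  have hx : ∀ i, A (i, 0) = x i := fun _ => rfl
  have hy : ∀ i, A (i, 1) = y i := fun _ => rfl
  ext ⟨i, a⟩ ⟨j, b⟩
  rw [hent]
  obtain ⟨h1, h2, h3⟩ := h i i.2 j j.2
  have h4 := halt (y i) (x j)
  rw [(h j j.2 i i.2).2.2] at h4
  clear_value A
  fin_cases a <;> fin_cases b
  · change Matrix.toBilin' N (A (i, 0)) (A (j, 0)) = stdJ n (i, 0) (j, 0)
    rw [hx, hx, h1]
    simp [stdJ]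
  · change Matrix.toBilin' N (A (i, 0)) (A (j, 1)) = stdJ n (i, 0) (j, 1)
    rw [hx, hy, h3]
    simp [stdJ, Matrix.one_apply, Fin.ext_iff]
  · change Matrix.toBilin' N (A (i, 1)) (A (j, 0)) = stdJ n (i, 1) (j, 0)
    rw [hy, hx, h4]
    by_cases hij : i = j
    · simp [stdJ, hij]
    · simp [stdJ, hij, Fin.val_inj, Ne.symm hij]
  · change Matrix.toBilin' N (A (i, 1)) (A (j, 1)) = stdJ n (i, 1) (j, 1)
    rw [hy, hy, h2]
    simp [stdJ]

lemma pfSum_sq (n : ℕ) (N : Matrix (Fin n × Fin 2) (Fin n × Fin 2) ℝ) (hN : Nᵀ = -N) :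
    pfSum n N ^ 2 = (2 ^ n * n.factorial) ^ 2 * N.det := by
  by_cases hd : N.det = 0
  · rw [hd, pfSum_of_det_eq_zero n N hN hd]
    simp
  · obtain ⟨A, hA⟩ := exists_congr_stdJ n N hN hd
    have h1 : A.det * N.det * A.det = 1 := by
      rw [← det_stdJ n, ← hA]
      simp [Matrix.det_mul]
    have h2 : A.det * pfSum n N = 2 ^ n * n.factorial := by
      rw [← pfSum_congr, hA, pfSum_stdJ]
    rw [← h2]
    linear_combination (-(pfSum n N ^ 2)) * h1

/-! ### Return to `Fin (2 * n)` -/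

/-- Lexicographic relabelling: `(i, b)` corresponds to `2 * i + b`. -/
def pairEquiv (n : ℕ) : Fin n × Fin 2 ≃ Fin (2 * n) :=
  finProdFinEquiv.trans (finCongr (Nat.mul_comm n 2))

lemma Pf_eq_pfSum (n : ℕ) (M : Matrix (Fin (2 * n)) (Fin (2 * n)) ℝ) :
    Pf n M = 1 / (2 ^ n * (n.factorial : ℝ)) *
      pfSum n (M.submatrix (pairEquiv n) (pairEquiv n)) := by
  unfold Pf pfSum
  congr 1
  have h0 : ∀ i : Fin n, pairEquiv n (i, 0) = ⟨2 * i.1, by omega⟩ := fun i => by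
    ext; simp [pairEquiv]
  have h1 : ∀ i : Fin n, pairEquiv n (i, 1) = ⟨2 * i.1 + 1, by omega⟩ := fun i => by
    ext; simp [pairEquiv]; omega
  rw [← Equiv.sum_comp (pairEquiv n).permCongr]
  refine Finset.sum_congr rfl fun σ _ => ?_
  rw [Equiv.Perm.sign_permCongr]
  simp [← h0, ← h1, Equiv.permCongr_apply]

lemma Pf_congr (n : ℕ) (A M : Matrix (Fin (2 * n)) (Fin (2 * n)) ℝ) :
    Pf n (A * M * Aᵀ) = A.det * Pf n M := by
  rw [Pf_eq_pfSum, Pf_eq_pfSum, ← Matrix.submatrix_mul_equiv _ _ _ (pairEquiv n) _,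
    ← Matrix.submatrix_mul_equiv _ _ _ (pairEquiv n) _, ← Matrix.transpose_submatrix,
    pfSum_congr, Matrix.det_submatrix_equiv_self]
  ring

lemma Pf_sq (n : ℕ) (M : Matrix (Fin (2 * n)) (Fin (2 * n)) ℝ) (hM : Mᵀ = -M) :
    Pf n M ^ 2 = M.det := by
  have hs : (M.submatrix (pairEquiv n) (pairEquiv n))ᵀ =
      -(M.submatrix (pairEquiv n) (pairEquiv n)) := by
    rw [Matrix.transpose_submatrix, hM]
    rfl
  have h := pfSum_sq n _ hs
  rw [Matrix.det_submatrix_equiv_self] at h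
  rw [Pf_eq_pfSum, mul_pow, h]
  have : (n.factorial : ℝ) ≠ 0 := by exact_mod_cast n.factorial_ne_zero
  field_simp

lemma Pf_smul (n : ℕ) (c : ℝ) (M : Matrix (Fin (2 * n)) (Fin (2 * n)) ℝ) :
    Pf n (c • M) = c ^ n * Pf n M := by
  unfold Pf
  simp only [Matrix.smul_apply, smul_eq_mul, Finset.prod_mul_distrib, Finset.prod_const,
    Finset.card_univ, Fintype.card_fin, Finset.mul_sum]
  refine Finset.sum_congr rfl fun σ _ => ?_
  ring

/-- For skew-symmetric `M` and odd `k = 2j+1`, the power `M^k` is again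
skew-symmetric, and `Pf (M^(2j+1)) = (-1)^(jn) (Pf M)^(2j+1)`.  In particular
`Pf (M^k) = (Pf M)^k` whenever `k ≡ 1 [MOD 4]`. -/
theorem pf_odd_pow (n : ℕ) (hn : 1 ≤ n) (M : Matrix (Fin (2 * n)) (Fin (2 * n)) ℝ)
    (hM : Mᵀ = -M) (j : ℕ) :
    (M ^ (2 * j + 1))ᵀ = -(M ^ (2 * j + 1)) ∧
      Pf n (M ^ (2 * j + 1)) = (-1) ^ (j * n) * (Pf n M) ^ (2 * j + 1) := by
  refine ⟨?_, ?_⟩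
  · rw [Matrix.transpose_pow, hM, Odd.neg_pow ⟨j, rfl⟩]
  · have ht : (M ^ j)ᵀ = (-1 : ℝ) ^ j • M ^ j := by
      rw [Matrix.transpose_pow, hM, ← neg_one_smul ℝ M, smul_pow]
    have hp : M ^ (2 * j + 1) = (-1 : ℝ) ^ j • (M ^ j * M * (M ^ j)ᵀ) := by
      rw [ht, Matrix.mul_smul, smul_smul, ← mul_pow]
      simp only [mul_neg, mul_one, neg_neg, one_pow, one_smul]
      rw [← pow_succ, ← pow_add]
      congr 1
      omega
    rw [hp, Pf_smul, Pf_congr, Matrix.det_pow, ← Pf_sq n M hM, ← pow_mul, ← pow_mul]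
    ring
end
end

section
/- (First main theorem of invariant theory for the special orthogonal group.) Let 1 ≤ m ≤ N and let P be a polynomial in the mN variables x_k^i (1 ≤ k ≤ m, 1 ≤ i ≤ N), regarded as a function of m vectors x₁,…,x_m ∈ ℝ^N. Suppose P is invariant under the simultaneous action of SO(N): for every real N×N matrix A with AᵀA = I and det A = 1, and all x₁,…,x_m, P(Ax₁,…,Ax_m) = P(x₁,…,x_m). Then the function (x₁,…,x_m) ↦ P(x₁,…,x_m) lies in the ℝ-subalgebra of functions on (ℝ^N)^m generated by the inner products (x_k, x_l) = Σ_{i=1}^{N} x_k^i x_l^i for 1 ≤ k ≤ l ≤ m, together with — in the case m = N — the function (x₁,…,x_N) ↦ det[x₁,…,x_N], the determinant of the N×N matrix whose columns are the coordinate vectors x₁,…,x_N. -/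
/-!
The proof reduces to the square case. A polynomial in `m ≤ N` vectors is a polynomial in `N` vectors
that ignores the last `N - m`; after it has been written as `F₀(G) + det(X) F₁(G)`, with `G` the
Gram matrix of the rows of the `N × N` matrix `X`, setting the extra vectors to zero gives the
result, since the determinant then vanishes if `m < N`.

In the square case, let `S` be a reflection. The polynomials `P(X) ± P(XS)` are semi-invariant under
the whole orthogonal group: they transform by `det(A)^ε` with `ε = 0` or `ε = 1`. So it suffices
that a semi-invariant `P` of `n × n` matrices has the form `det(X)^ε F(G)` (`exists_eq_of_semiInv`),
which goes by induction on `n`.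

* Rotate the first row of `X` to `(r₀, 0, …, 0)`, so that `X` has first column `r` and lower right
  block `Y`. As a polynomial in `r`, `P` has coefficients that are semi-invariant in `Y`, hence by
  induction of the form `det(Y)^ε F(YYᵀ)`; and by the reflection in the first coordinate only
  monomials in `r` of degree congruent to `ε` mod 2 contribute. As `det X = r₀ det Y`,
  `r₀ rᵢ = G₀ᵢ` and `(YYᵀ)ᵢⱼ = Gᵢⱼ - G₀ᵢ G₀ⱼ / G₀₀` (row indices of `X` on the right), this gives
  `P(X) = det(X)^ε F(G) / G₀₀ ^ a` (`exists_pow_mul_eq`).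
* By symmetry also `P(X) = det(X)^ε F'(G) / G₁₁ ^ b` if `n ≥ 2`. The entries of `G` are
  algebraically independent, because all symmetric matrices with large diagonal and small
  off-diagonal entries are Gram matrices (`funext_rowGram`). Hence `G₁₁ ^ b F = G₀₀ ^ a F'` as
  polynomials in the variables `Gᵢⱼ`, and as the variables `G₀₀` and `G₁₁` are distinct primes,
  `G₀₀ ^ a` divides `F`.
* For `n = 1` one splits `P` into its even and its odd part.
-/

noncomputable section

open Matrix

/-! ### Gram matrices and their algebraic independence -/

/-- The Gram matrix of the rows of `X`, as a function on unordered pairs of row indices, so that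
polynomials in the entries of a symmetric matrix are `MvPolynomial (Sym2 (Fin m)) ℝ`. -/
def rowGram {m n : ℕ} (X : Matrix (Fin m) (Fin n) ℝ) : Sym2 (Fin m) → ℝ :=
  Sym2.lift ⟨fun i j => ∑ c, X i c * X j c, fun i j => by simp only [mul_comm]⟩

theorem rowGram_mk {m n : ℕ} (X : Matrix (Fin m) (Fin n) ℝ) (i j : Fin m) :
    rowGram X s(i, j) = ∑ c, X i c * X j c := rfl

theorem rowGram_eq_mul {m n : ℕ} (X : Matrix (Fin m) (Fin n) ℝ) (i j : Fin m) :
    rowGram X s(i, j) = (X * Xᵀ) i j := rfl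

theorem rowGram_mul {n : ℕ} (X A : Matrix (Fin n) (Fin n) ℝ) (hA : A * Aᵀ = 1) :
    rowGram (X * A) = rowGram X := by
  funext e
  induction e with
  | _ i j => rw [rowGram_eq_mul, rowGram_eq_mul, transpose_mul, Matrix.mul_assoc,
      ← Matrix.mul_assoc A, hA, Matrix.one_mul]

/-- Evaluation of a polynomial in matrix entries at the matrix `X`. -/
def evalMat {m n : ℕ} (X : Matrix (Fin m) (Fin n) ℝ) : MvPolynomial (Fin m × Fin n) ℝ →+* ℝ :=
  MvPolynomial.eval (fun p => X p.1 p.2)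

/-- A symmetric matrix with diagonal entries at least `n + 1` and off-diagonal entries at most `1` in
absolute value is positive definite, hence the Gram matrix of an invertible matrix. -/
theorem exists_gram_of_box {n : ℕ} (g : Sym2 (Fin n) → ℝ)
    (hd : ∀ i, (n : ℝ) + 1 ≤ g s(i, i)) (ho : ∀ i j, i ≠ j → |g s(i, j)| ≤ 1) :
    ∃ X : Matrix (Fin n) (Fin n) ℝ, rowGram X = g ∧ X.det ≠ 0 := by
  set M : Matrix (Fin n) (Fin n) ℝ := Matrix.of fun i j => g s(i, j) with hM
  have hherm : M.IsHermitian := by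
    ext i j; simp [hM, Sym2.eq_swap]
  have hpos : M.PosDef := by
    refine PosDef.of_dotProduct_mulVec_pos hherm fun x hx => ?_
    have h1 : ∀ i j, (if i = j then ((n : ℝ) + 1) * x i ^ 2 else 0) - (x i ^ 2 + x j ^ 2) / 2
        ≤ x i * (M i j * x j) := by
      intro i j
      by_cases h : i = j
      · subst h
        have := hd i
        simp only [hM, of_apply, if_true]
        nlinarith [sq_nonneg (x i)]
      · simp only [h, hM, of_apply, if_false]
        have := abs_le.1 (ho i j h)
        nlinarith [sq_nonneg (x i + x j), sq_nonneg (x i - x j)]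
    have h2 : star x ⬝ᵥ M *ᵥ x = ∑ i, ∑ j, x i * (M i j * x j) := by
      simp [dotProduct, mulVec, Finset.mul_sum]
    have h3 : ∑ i, ∑ j, ((if i = j then ((n : ℝ) + 1) * x i ^ 2 else 0)
        - (x i ^ 2 + x j ^ 2) / 2) = ∑ i, x i ^ 2 := by
      simp only [Finset.sum_sub_distrib, ← Finset.sum_div, Finset.sum_add_distrib,
        Finset.sum_ite_eq, Finset.mem_univ, if_true, Finset.sum_const, Finset.card_univ,
        Fintype.card_fin, nsmul_eq_mul, ← Finset.mul_sum]
      ring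
    rw [h2]
    refine lt_of_lt_of_le ?_ (Finset.sum_le_sum fun i _ => Finset.sum_le_sum fun j _ => h1 i j)
    rw [h3]
    obtain ⟨i, hi⟩ := Function.ne_iff.1 hx
    exact Finset.sum_pos' (fun _ _ => sq_nonneg _) ⟨i, Finset.mem_univ _, by
      have : x i ≠ 0 := hi
      positivity⟩
  have hex : ∃ B : Matrix (Fin n) (Fin n) ℝ, M = Bᵀ * B := by
    open scoped MatrixOrder Matrix.Norms.L2Operator in
    obtain ⟨B, hB⟩ := CStarAlgebra.nonneg_iff_eq_star_mul_self.mp hpos.posSemidef.nonneg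
    exact ⟨B, by simpa [star_eq_conjTranspose] using hB⟩
  obtain ⟨B, hB⟩ := hex
  refine ⟨Bᵀ, ?_, ?_⟩
  · funext e
    induction e with
    | _ i j => rw [rowGram_eq_mul, transpose_transpose, ← hB]; rfl
  · intro h0
    have := hpos.det_pos
    rw [hB, det_mul, h0] at this
    simp at this

/-- Algebraic independence of the inner products, in the form: a polynomial in them is determined by
its values at the Gram matrices of invertible matrices. -/
theorem funext_rowGram {n : ℕ} (F F' : MvPolynomial (Sym2 (Fin n)) ℝ)
    (h : ∀ X : Matrix (Fin n) (Fin n) ℝ, X.det ≠ 0 → (∀ i, rowGram X s(i, i) ≠ 0) →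
      MvPolynomial.eval (rowGram X) F = MvPolynomial.eval (rowGram X) F') : F = F' := by
  classical
  refine MvPolynomial.funext_set
    (fun e : Sym2 (Fin n) => if e.IsDiag then Set.Ioi ((n : ℝ) + 1) else Set.Ioo (-1) 1) ?_ ?_
  · intro e
    split_ifs
    · exact Set.Ioi_infinite _
    · exact Set.Ioo_infinite (by norm_num)
  · intro g hg
    have hd : ∀ i, (n : ℝ) + 1 ≤ g s(i, i) := fun i => by
      have := hg s(i, i) (Set.mem_univ _)
      simp at this
      exact this.le
    obtain ⟨X, rfl, hX⟩ := exists_gram_of_box g hd fun i j hij => by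
      have := hg s(i, j) (Set.mem_univ _)
      simp [hij] at this
      exact abs_le.2 ⟨this.1.le, this.2.le⟩
    exact h X hX fun i => by exact (lt_of_lt_of_le (by positivity) (hd i)).ne'

/-! ### Rotating the first row to a coordinate axis -/

theorem exists_rotation {n : ℕ} (v : Fin (n + 1) → ℝ) :
    ∃ A : Matrix (Fin (n + 1)) (Fin (n + 1)) ℝ, Aᵀ * A = 1 ∧ ∀ j : Fin n, (v ᵥ* A) j.succ = 0 := by
  classical
  by_cases hv : v = 0
  · exact ⟨1, by simp, by simp [hv]⟩
  set w : EuclideanSpace ℝ (Fin (n + 1)) := WithLp.toLp 2 v with hw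
  have hw0 : w ≠ 0 := fun h => hv (by simpa [hw] using h)
  have hn : ‖w‖ ≠ 0 := norm_ne_zero_iff.2 hw0
  obtain ⟨b, hb⟩ := Orthonormal.exists_orthonormalBasis_extension_of_card_eq (𝕜 := ℝ)
    (E := EuclideanSpace ℝ (Fin (n + 1))) (ι := Fin (n + 1)) (by simp)
    (v := fun _ => (‖w‖⁻¹ : ℝ) • w) (s := {0}) (by
      constructor
      · intro i
        simp [norm_smul, hn]
      · intro i j hij
        exact absurd (Subsingleton.elim i j) hij)
  have hb0 := hb 0 rfl
  have horth := orthonormal_iff_ite.1 b.orthonormal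
  refine ⟨Matrix.of fun i j => b j i, ?_, ?_⟩
  · ext i j
    have := horth i j
    simp only [PiLp.inner_apply, RCLike.inner_apply, conj_trivial] at this
    simp only [mul_apply, transpose_apply, of_apply, one_apply, ← this]
    exact Finset.sum_congr rfl fun _ _ => mul_comm _ _
  · intro j
    have h1 : w = ‖w‖ • b 0 := by rw [hb0, smul_smul, mul_inv_cancel₀ hn, one_smul]
    have h2 : inner ℝ (b j.succ) w = 0 := by
      rw [h1, inner_smul_right, horth, if_neg (Fin.succ_ne_zero j), mul_zero]
    simp only [PiLp.inner_apply, RCLike.inner_apply, conj_trivial] at h2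
    simpa [vecMul, dotProduct, hw] using h2

/-- The square matrix with first column `r`, lower right block `Y`, and zeros in the rest of the
first row. -/
def bordered {R : Type*} [Zero R] {n : ℕ} (r : Fin (n + 1) → R) (Y : Matrix (Fin n) (Fin n) R) :
    Matrix (Fin (n + 1)) (Fin (n + 1)) R :=
  Matrix.of fun i c => Fin.cases (r i) (fun c' => Fin.cases 0 (fun j => Y j c') i) c

section bordered
variable {R : Type*} [Zero R] {n : ℕ} (r : Fin (n + 1) → R) (Y : Matrix (Fin n) (Fin n) R)

@[simp] theorem bordered_zero (i : Fin (n + 1)) : bordered r Y i 0 = r i := rfl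
@[simp] theorem bordered_zero_succ (c : Fin n) : bordered r Y 0 c.succ = 0 := rfl
@[simp] theorem bordered_succ_succ (i c : Fin n) : bordered r Y i.succ c.succ = Y i c := rfl

end bordered

theorem det_bordered {n : ℕ} (r : Fin (n + 1) → ℝ) (Y : Matrix (Fin n) (Fin n) ℝ) :
    (bordered r Y).det = r 0 * Y.det := by
  rw [det_succ_row_zero, Fin.sum_univ_succ]
  have : (bordered r Y).submatrix Fin.succ Fin.succ = Y := by
    ext i j; simp
  simp [this]

theorem rowGram_bordered_zero {n : ℕ} (r : Fin (n + 1) → ℝ) (Y : Matrix (Fin n) (Fin n) ℝ)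
    (i : Fin (n + 1)) : rowGram (bordered r Y) s(0, i) = r 0 * r i := by
  simp [rowGram_mk, Fin.sum_univ_succ]

theorem rowGram_bordered_succ {n : ℕ} (r : Fin (n + 1) → ℝ) (Y : Matrix (Fin n) (Fin n) ℝ)
    (i j : Fin n) : rowGram (bordered r Y) s(i.succ, j.succ) =
      r i.succ * r j.succ + rowGram Y s(i, j) := by
  simp [rowGram_mk, Fin.sum_univ_succ]

/-- The block diagonal matrix `diag(a, A)`, which is `bordered (Pi.single 0 a) A`, acts on a bordered
matrix by scaling the border and multiplying the block. -/
theorem bordered_mul_bordered {n : ℕ} (r : Fin (n + 1) → ℝ) (a : ℝ)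
    (Y A : Matrix (Fin n) (Fin n) ℝ) :
    bordered r Y * bordered (Pi.single 0 a) A = bordered (a • r) (Y * A) := by
  ext i c
  rw [mul_apply, Fin.sum_univ_succ]
  cases i using Fin.cases <;> cases c using Fin.cases <;>
    simp [mul_apply, mul_comm]

theorem bordered_orth {n : ℕ} (a : ℝ) (ha : a * a = 1)
    (A : Matrix (Fin n) (Fin n) ℝ) (hA : Aᵀ * A = 1) :
    (bordered (Pi.single 0 a) A)ᵀ * bordered (Pi.single 0 a) A = 1 := by
  ext i c
  rw [mul_apply, Fin.sum_univ_succ]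
  cases i using Fin.cases <;> cases c using Fin.cases
  · simp [ha]
  · simp [one_apply, (Fin.succ_ne_zero _).symm]
  · simp [one_apply]
  · rename_i i j
    have := congrFun (congrFun hA i) j
    simpa [mul_apply, one_apply] using this

/-! ### Expansion of a semi-invariant in the border -/

/-- `P` is a semi-invariant of the orthogonal group acting on the rows of a square matrix, with
character `det ^ ε`. -/
def SemiInv {n : ℕ} (ε : ℕ) (P : MvPolynomial (Fin n × Fin n) ℝ) : Prop :=
  ∀ A : Matrix (Fin n) (Fin n) ℝ, Aᵀ * A = 1 → ∀ X : Matrix (Fin n) (Fin n) ℝ,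
    evalMat (X * A) P = A.det ^ ε * evalMat X P

/-- `P`, evaluated at bordered matrices, as a polynomial in the border whose coefficients are
polynomials in the block. -/
def splitOff {n : ℕ} (P : MvPolynomial (Fin (n + 1) × Fin (n + 1)) ℝ) :
    MvPolynomial (Fin (n + 1)) (MvPolynomial (Fin n × Fin n) ℝ) :=
  MvPolynomial.aeval (fun p => bordered MvPolynomial.X
    ((mvPolynomialX (Fin n) (Fin n) ℝ).map MvPolynomial.C) p.1 p.2) P

theorem eval_splitOff {n : ℕ} (P : MvPolynomial (Fin (n + 1) × Fin (n + 1)) ℝ)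
    (r : Fin (n + 1) → ℝ) (Y : Matrix (Fin n) (Fin n) ℝ) :
    MvPolynomial.eval r (MvPolynomial.map (evalMat Y) (splitOff P)) =
      evalMat (bordered r Y) P := by
  have : ((MvPolynomial.eval r).comp (MvPolynomial.map (evalMat Y))).comp
      (MvPolynomial.aeval (R := ℝ) (fun p : Fin (n + 1) × Fin (n + 1) =>
        bordered MvPolynomial.X
    ((mvPolynomialX (Fin n) (Fin n) ℝ).map MvPolynomial.C) p.1 p.2)).toRingHom
      = evalMat (bordered r Y) := by
    refine MvPolynomial.ringHom_ext ?_ ?_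
    · intro a
      simp [evalMat, MvPolynomial.algebraMap_apply]
    · rintro ⟨i, c⟩
      cases i using Fin.cases <;> cases c using Fin.cases <;> simp [evalMat]
  exact congrArg (fun f => f P) this

theorem semiInv_coeff {n ε : ℕ} {P : MvPolynomial (Fin (n + 1) × Fin (n + 1)) ℝ}
    (hP : SemiInv ε P) (s : Fin (n + 1) →₀ ℕ) : SemiInv ε ((splitOff P).coeff s) := by
  intro A hA Y
  have : MvPolynomial.map (evalMat (Y * A)) (splitOff P) =
      MvPolynomial.C (A.det ^ ε) * MvPolynomial.map (evalMat Y) (splitOff P) := by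
    refine MvPolynomial.funext fun r => ?_
    have h := hP _ (bordered_orth 1 (by simp) A hA) (bordered r Y)
    rw [bordered_mul_bordered, det_bordered, one_smul, Pi.single_eq_same, one_mul] at h
    rw [map_mul, eval_splitOff, eval_splitOff, MvPolynomial.eval_C, h]
  have := congrArg (MvPolynomial.coeff s) this
  rwa [MvPolynomial.coeff_map, MvPolynomial.coeff_C_mul, MvPolynomial.coeff_map] at this

/-- The reflection in the first coordinate kills all monomials in the border whose degree is not
congruent to `ε` modulo `2`. -/
theorem evalMat_bordered_eq {n ε : ℕ} {P : MvPolynomial (Fin (n + 1) × Fin (n + 1)) ℝ}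
    (hP : SemiInv ε P) (r : Fin (n + 1) → ℝ) (Y : Matrix (Fin n) (Fin n) ℝ) :
    evalMat (bordered r Y) P = ∑ s ∈ (splitOff P).support,
      if Even (s.degree + ε) then evalMat Y ((splitOff P).coeff s) * ∏ i, r i ^ s i else 0 := by
  have hexp : ∀ r : Fin (n + 1) → ℝ, evalMat (bordered r Y) P =
      ∑ s ∈ (splitOff P).support, evalMat Y ((splitOff P).coeff s) * ∏ i, r i ^ s i := by
    intro r
    rw [← eval_splitOff, MvPolynomial.eval_map, MvPolynomial.eval₂_eq']
  have h := hP _ (bordered_orth (-1) (by simp) 1 (by simp)) (bordered r Y)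
  rw [bordered_mul_bordered, det_bordered, mul_one, det_one, mul_one, Pi.single_eq_same] at h
  -- Averaging over the reflection cancels the monomials of the wrong parity.
  have h2 : evalMat (bordered r Y) P =
      (evalMat (bordered r Y) P + (-1) ^ ε * evalMat (bordered ((-1 : ℝ) • r) Y) P) / 2 := by
    rw [h, ← mul_assoc, ← pow_add, (Even.add_self ε).neg_one_pow]; ring
  rw [h2, hexp r, hexp, Finset.mul_sum, ← Finset.sum_add_distrib, Finset.sum_div]
  refine Finset.sum_congr rfl fun s _ => ?_
  have h3 : ∏ i, ((-1 : ℝ) • r) i ^ s i = (-1) ^ s.degree * ∏ i, r i ^ s i := by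
    simp only [Pi.smul_apply, smul_eq_mul, mul_pow, Finset.prod_mul_distrib,
      Finset.prod_pow_eq_pow_sum, Finsupp.degree_eq_sum]
  rw [h3]
  have h4 : (-1 : ℝ) ^ ε * (evalMat Y ((splitOff P).coeff s) *
      ((-1) ^ s.degree * ∏ i, r i ^ s i)) = (-1) ^ (s.degree + ε) *
        (evalMat Y ((splitOff P).coeff s) * ∏ i, r i ^ s i) := by
    rw [pow_add]; ring
  rw [h4]
  split_ifs with he
  · rw [he.neg_one_pow]; ring
  · rw [(Nat.not_even_iff_odd.1 he).neg_one_pow]; ring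

/-! ### Semi-invariants as polynomials in the Gram matrix, up to a power of `G₀₀` -/

theorem eval_mem_subalgebra {ι σ : Type*} (S : Subalgebra ℝ (ι → ℝ)) (u : ι → σ → ℝ)
    (hu : ∀ e, (fun p => u p e) ∈ S) (F : MvPolynomial σ ℝ) :
    (fun p => MvPolynomial.eval (u p) F) ∈ S := by
  induction F using MvPolynomial.induction_on with
  | C a => simp only [MvPolynomial.eval_C]; exact S.algebraMap_mem a
  | add p q hp hq => simp only [map_add]; exact S.add_mem hp hq
  | mul_X p e hp => simp only [map_mul, MvPolynomial.eval_X]; exact S.mul_mem hp (hu e)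

/-- The functions of a border `r` and a block `Y` which, for `r 0 ≠ 0`, become polynomials in the
Gram matrix `G` of the bordered matrix after multiplication by a power of `G₀₀ = (r 0) ^ 2`. -/
def clearedAlgebra (n : ℕ) :
    Subalgebra ℝ ((Fin (n + 1) → ℝ) × Matrix (Fin n) (Fin n) ℝ → ℝ) where
  carrier := {f | ∃ (a : ℕ) (F : MvPolynomial (Sym2 (Fin (n + 1))) ℝ), ∀ r Y, r 0 ≠ 0 →
    f (r, Y) * (r 0 * r 0) ^ a = MvPolynomial.eval (rowGram (bordered r Y)) F}
  mul_mem' := by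
    rintro f g ⟨a, F, hF⟩ ⟨b, G, hG⟩
    refine ⟨a + b, F * G, fun r Y hr => ?_⟩
    rw [map_mul, ← hF r Y hr, ← hG r Y hr, Pi.mul_apply]
    ring
  add_mem' := by
    rintro f g ⟨a, F, hF⟩ ⟨b, G, hG⟩
    refine ⟨a + b, F * MvPolynomial.X s(0, 0) ^ b + G * MvPolynomial.X s(0, 0) ^ a,
      fun r Y hr => ?_⟩
    rw [map_add, map_mul, map_mul, map_pow, map_pow, MvPolynomial.eval_X, rowGram_bordered_zero,
      ← hF r Y hr, ← hG r Y hr, Pi.add_apply]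
    ring
  algebraMap_mem' c := ⟨0, MvPolynomial.C c, fun r Y _ => by simp⟩

/-- Inductive step, with denominators: where the first row of `X` is nonzero, a semi-invariant is
`det(X) ^ ε` times a polynomial in the Gram matrix `G`, divided by a power of `G₀₀`. -/
theorem exists_pow_mul_eq {n ε : ℕ} {P : MvPolynomial (Fin (n + 1) × Fin (n + 1)) ℝ}
    (hP : SemiInv ε P)
    (ih : ∀ Q : MvPolynomial (Fin n × Fin n) ℝ, SemiInv ε Q →
      ∃ F, ∀ Y, evalMat Y Q = Y.det ^ ε * MvPolynomial.eval (rowGram Y) F) :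
    ∃ (a : ℕ) (F : MvPolynomial (Sym2 (Fin (n + 1))) ℝ), ∀ X, rowGram X s(0, 0) ≠ 0 →
      evalMat X P * rowGram X s(0, 0) ^ a = X.det ^ ε * MvPolynomial.eval (rowGram X) F := by
  choose G hG using fun s => ih _ (semiInv_coeff hP s)
  have hratio : ∀ i, (fun p : (Fin (n + 1) → ℝ) × Matrix (Fin n) (Fin n) ℝ => p.1 i / p.1 0) ∈
      clearedAlgebra n := fun i =>
    ⟨1, MvPolynomial.X s(0, i), fun r Y hr => by
      rw [MvPolynomial.eval_X, rowGram_bordered_zero]; field_simp⟩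
  have hsq : (fun p : (Fin (n + 1) → ℝ) × Matrix (Fin n) (Fin n) ℝ => p.1 0 * p.1 0) ∈
      clearedAlgebra n :=
    ⟨0, MvPolynomial.X s(0, 0), fun r Y hr => by
      rw [MvPolynomial.eval_X, rowGram_bordered_zero]; ring⟩
  have hinv : (fun p : (Fin (n + 1) → ℝ) × Matrix (Fin n) (Fin n) ℝ => (p.1 0 * p.1 0)⁻¹) ∈
      clearedAlgebra n :=
    ⟨1, 1, fun r Y hr => by rw [map_one]; field_simp⟩
  have hgram : ∀ e, (fun p : (Fin (n + 1) → ℝ) × Matrix (Fin n) (Fin n) ℝ => rowGram p.2 e) ∈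
      clearedAlgebra n := fun e => by
    induction e with
    | _ i j =>
      refine ⟨1, MvPolynomial.X s(i.succ, j.succ) * MvPolynomial.X s(0, 0)
        - MvPolynomial.X s(0, i.succ) * MvPolynomial.X s(0, j.succ), fun r Y hr => ?_⟩
      simp only [map_sub, map_mul, MvPolynomial.eval_X, rowGram_bordered_zero,
        rowGram_bordered_succ]
      ring
  -- As `det (bordered r Y) = r₀ det Y`, this sum is the quotient of `P` by `det ^ ε`: for
  -- `|s| + ε` even, `∏ rᵢ ^ sᵢ = r₀ ^ ε ∏ (rᵢ / r₀) ^ sᵢ (r₀²) ^ ((|s| + ε) / 2) (r₀⁻²) ^ ε`.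
  obtain ⟨a, F, hF⟩ : (∑ s ∈ (splitOff P).support, if Even (s.degree + ε) then
      (fun p : (Fin (n + 1) → ℝ) × Matrix (Fin n) (Fin n) ℝ =>
        MvPolynomial.eval (rowGram p.2) (G s)) *
      (∏ i, (fun p : (Fin (n + 1) → ℝ) × Matrix (Fin n) (Fin n) ℝ => p.1 i / p.1 0) ^ s i) *
      (fun p => p.1 0 * p.1 0) ^ ((s.degree + ε) / 2) *
      (fun p => (p.1 0 * p.1 0)⁻¹) ^ ε else 0) ∈ clearedAlgebra n := by
    refine Subalgebra.sum_mem _ fun s _ => ?_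
    split_ifs
    · exact mul_mem (mul_mem (mul_mem (eval_mem_subalgebra _ _ hgram _)
        (Subalgebra.prod_mem _ fun i _ => pow_mem (hratio i) _)) (pow_mem hsq _)) (pow_mem hinv _)
    · exact zero_mem _
  have hbord : ∀ r Y, r 0 ≠ 0 →
      evalMat (bordered r Y) P * rowGram (bordered r Y) s(0, 0) ^ a =
        (bordered r Y).det ^ ε * MvPolynomial.eval (rowGram (bordered r Y)) F := by
    intro r Y hr
    rw [← hF r Y hr, ← mul_assoc, rowGram_bordered_zero, det_bordered, evalMat_bordered_eq hP]
    congr 1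
    rw [Finset.sum_apply, Finset.mul_sum]
    refine Finset.sum_congr rfl fun s _ => ?_
    split_ifs with he
    · obtain ⟨t, ht⟩ := he
      have h1 : ∏ i, (r i / r 0) ^ s i = (∏ i, r i ^ s i) / r 0 ^ s.degree := by
        simp only [div_pow, Finset.prod_div_distrib, Finset.prod_pow_eq_pow_sum,
          Finsupp.degree_eq_sum]
      have h2 : (r 0 * r 0) ^ t = r 0 ^ s.degree * r 0 ^ ε := by
        rw [← pow_add, ht, mul_pow, pow_add]
      simp only [Pi.mul_apply, Pi.pow_apply, Finset.prod_apply]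
      rw [h1, ht, show (t + t) / 2 = t by omega, h2, hG, mul_inv, mul_pow, mul_pow, inv_pow]
      field_simp
    · simp
  refine ⟨a, F, fun X hX => ?_⟩
  obtain ⟨A, hA, hA0⟩ := exists_rotation (X 0)
  have hb : X * A = bordered (fun i => (X * A) i 0) ((X * A).submatrix Fin.succ Fin.succ) := by
    ext i c
    cases c using Fin.cases with
    | zero => simp
    | succ c =>
      cases i using Fin.cases with
      | zero => exact hA0 c
      | succ i => simp
  have hgr := rowGram_mul X A (mul_eq_one_comm.1 hA)
  have hdet : A.det ^ ε ≠ 0 := pow_ne_zero _ fun h => by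
    have := congrArg det hA
    simp [h] at this
  have key := hbord (fun i => (X * A) i 0) ((X * A).submatrix Fin.succ Fin.succ) fun h => by
    rw [← hgr, hb, rowGram_bordered_zero] at hX
    simp only [h, mul_zero, ne_eq, not_true] at hX
  rw [← hb, hgr, hP A hA, det_mul, mul_pow] at key
  exact mul_left_cancel₀ hdet (by linear_combination key)

/-! ### Removing the denominator -/

/-- `exists_pow_mul_eq` with an arbitrary row in place of the first one; the sign of the
transposition only matters for odd `ε`. -/
theorem exists_pow_mul_eq_of_index {n ε : ℕ} {P : MvPolynomial (Fin (n + 1) × Fin (n + 1)) ℝ}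
    (hP : SemiInv ε P)
    (ih : ∀ Q : MvPolynomial (Fin n × Fin n) ℝ, SemiInv ε Q →
      ∃ F, ∀ Y, evalMat Y Q = Y.det ^ ε * MvPolynomial.eval (rowGram Y) F) (k : Fin (n + 1)) :
    ∃ (a : ℕ) (F : MvPolynomial (Sym2 (Fin (n + 1))) ℝ), ∀ X, rowGram X s(k, k) ≠ 0 →
      evalMat X P * rowGram X s(k, k) ^ a = X.det ^ ε * MvPolynomial.eval (rowGram X) F := by
  set σ : Equiv.Perm (Fin (n + 1)) := Equiv.swap 0 k with hσ
  have hren : ∀ X, evalMat X (MvPolynomial.rename (Prod.map σ id) P) =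
      evalMat (X.submatrix σ id) P := fun X => by
    simp only [evalMat, MvPolynomial.eval_rename]; rfl
  have hinvol : ∀ X : Matrix (Fin (n + 1)) (Fin (n + 1)) ℝ,
      (X.submatrix σ id).submatrix σ id = X := fun X => by
    ext i j; simp [hσ]
  obtain ⟨a, F, hF⟩ := exists_pow_mul_eq (P := MvPolynomial.rename (Prod.map σ id) P)
    (ε := ε) (fun A hA X => by
      rw [hren, hren, ← hP A hA]; rfl) ih
  refine ⟨a, MvPolynomial.C ((Equiv.Perm.sign σ : ℝ) ^ ε) * MvPolynomial.rename (Sym2.map σ) F,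
    fun X hX => ?_⟩
  have hg : rowGram (X.submatrix σ id) = rowGram X ∘ Sym2.map σ := by
    funext e
    induction e with
    | _ i j => rfl
  have h0 : rowGram (X.submatrix σ id) s(0, 0) = rowGram X s(k, k) := by
    rw [hg, Function.comp_apply, Sym2.map_mk]; simp [hσ]
  have h := hF (X.submatrix σ id) (by rwa [h0])
  rw [hren, hinvol, h0, det_permute, hg] at h
  rw [h, map_mul, MvPolynomial.eval_C, MvPolynomial.eval_rename, mul_pow]
  ring

theorem exists_even_odd_part (P : MvPolynomial (Fin 1 × Fin 1) ℝ) :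
    ∃ F₀ F₁ : MvPolynomial (Sym2 (Fin 1)) ℝ, ∀ X : Matrix (Fin 1) (Fin 1) ℝ,
      evalMat X P = MvPolynomial.eval (rowGram X) F₀ +
        X.det * MvPolynomial.eval (rowGram X) F₁ := by
  induction P using MvPolynomial.induction_on with
  | C a => exact ⟨MvPolynomial.C a, 0, fun X => by simp [evalMat]⟩
  | add p q hp hq =>
    obtain ⟨F₀, F₁, hF⟩ := hp
    obtain ⟨G₀, G₁, hG⟩ := hq
    exact ⟨F₀ + G₀, F₁ + G₁, fun X => by rw [map_add, hF, hG, map_add, map_add]; ring⟩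
  | mul_X p e hp =>
    obtain ⟨F₀, F₁, hF⟩ := hp
    refine ⟨MvPolynomial.X s(0, 0) * F₁, F₀, fun X => ?_⟩
    have he : e = (0, 0) := Subsingleton.elim _ _
    have h1 : evalMat X (MvPolynomial.X e) = X.det := by simp [evalMat, he]
    have h2 : rowGram X s(0, 0) = X.det * X.det := by simp [rowGram_mk]
    rw [map_mul, hF, h1, map_mul, MvPolynomial.eval_X, h2]
    ring

/-- An identity that holds where the first row is nonzero holds everywhere, by continuity along a line
through `X`. -/
theorem evalMat_eq_of_generic {n ε : ℕ} {P : MvPolynomial (Fin (n + 1) × Fin (n + 1)) ℝ}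
    {F : MvPolynomial (Sym2 (Fin (n + 1))) ℝ}
    (h : ∀ X, rowGram X s(0, 0) ≠ 0 →
      evalMat X P = X.det ^ ε * MvPolynomial.eval (rowGram X) F)
    (X : Matrix (Fin (n + 1)) (Fin (n + 1)) ℝ) :
    evalMat X P = X.det ^ ε * MvPolynomial.eval (rowGram X) F := by
  by_cases hX : rowGram X s(0, 0) = 0
  swap
  · exact h X hX
  have hX0 : ∀ c, X 0 c = 0 := fun c => by
    rw [rowGram_mk] at hX
    exact mul_self_eq_zero.1
      ((Finset.sum_eq_zero_iff_of_nonneg fun c _ => mul_self_nonneg _).1 hX c (Finset.mem_univ c))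
  set Z : ℝ → Matrix (Fin (n + 1)) (Fin (n + 1)) ℝ := fun t => X + t • Matrix.single 0 0 1 with hZ
  have hZc : Continuous Z := by fun_prop
  have hZe : ∀ i c, Continuous fun t => Z t i c := fun i c => hZc.matrix_elem i c
  have hgc : Continuous fun t => rowGram (Z t) := continuous_pi fun e => by
    induction e with
    | _ i j =>
      simp only [rowGram_mk]
      exact continuous_finsetSum _ fun c _ => (hZe i c).mul (hZe j c)
  have heq : (fun t => evalMat (Z t) P) =
      fun t => (Z t).det ^ ε * MvPolynomial.eval (rowGram (Z t)) F := by
    refine Continuous.ext_on (dense_compl_singleton (0 : ℝ)) ?_ ?_ ?_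
    · exact (MvPolynomial.continuous_eval P).comp (continuous_pi fun p => hZe p.1 p.2)
    · exact (hZc.matrix_det.pow ε).mul ((MvPolynomial.continuous_eval F).comp hgc)
    · intro t ht
      refine h _ ?_
      have ht : t ≠ 0 := ht
      simp [rowGram_mk, hZ, hX0, Matrix.single_apply, ht]
  simpa [hZ] using congrFun heq 0

/-- The first main theorem for the orthogonal group and square matrices, for both characters. -/
theorem exists_eq_of_semiInv {ε : ℕ} (hε : ε ≤ 1) : ∀ {n : ℕ} {P : MvPolynomial (Fin n × Fin n) ℝ},
    SemiInv ε P → ∃ F, ∀ X, evalMat X P = X.det ^ ε * MvPolynomial.eval (rowGram X) F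
  | 0, P, _ => ⟨MvPolynomial.C (evalMat 0 P), fun X => by simp [Subsingleton.elim X 0]⟩
  | 1, P, hP => by
    obtain ⟨F₀, F₁, hF⟩ := exists_even_odd_part P
    have hneg : ∀ X, evalMat X P = (-1) ^ ε * (MvPolynomial.eval (rowGram X) F₀ -
        X.det * MvPolynomial.eval (rowGram X) F₁) := fun X => by
      have h := hP (-1) (by simp) X
      have h1 : evalMat (X * -1) P = MvPolynomial.eval (rowGram X) F₀ -
          X.det * MvPolynomial.eval (rowGram X) F₁ := by
        rw [hF, rowGram_mul X (-1) (by simp), det_mul]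
        simp
        ring
      rw [h1] at h
      rw [h, det_neg, det_one, Fintype.card_fin, pow_one, mul_one, ← mul_assoc, ← pow_add,
        (Even.add_self ε).neg_one_pow, one_mul]
    interval_cases ε
    · exact ⟨F₀, fun X => by linarith [hF X, hneg X]⟩
    · exact ⟨F₁, fun X => by linarith [hF X, hneg X]⟩
  | n + 2, P, hP => by
    have ih := fun Q hQ => exists_eq_of_semiInv hε (n := n + 1) (P := Q) hQ
    obtain ⟨a, F, hF⟩ := exists_pow_mul_eq_of_index hP ih 0
    obtain ⟨b, F', hF'⟩ := exists_pow_mul_eq_of_index hP ih 1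
    have hcross : MvPolynomial.X s(1, 1) ^ b * F = MvPolynomial.X s(0, 0) ^ a * F' := by
      refine funext_rowGram _ _ fun X hdet hX => ?_
      refine mul_left_cancel₀ (pow_ne_zero ε hdet) ?_
      simp only [map_mul, map_pow, MvPolynomial.eval_X]
      linear_combination (-(rowGram X s(1, 1)) ^ b) * hF X (hX 0)
        + (rowGram X s(0, 0)) ^ a * hF' X (hX 1)
    have hprime : Prime (MvPolynomial.X s(0, 0) : MvPolynomial (Sym2 (Fin (n + 2))) ℝ) :=
      MvPolynomial.X_prime
    obtain ⟨F₀, rfl⟩ : MvPolynomial.X s(0, 0) ^ a ∣ F := by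
      refine hprime.pow_dvd_of_dvd_mul_left a (fun h => ?_) ⟨F', hcross⟩
      have := MvPolynomial.X_dvd_X.1 (hprime.dvd_of_dvd_pow h)
      simp at this
    refine ⟨F₀, evalMat_eq_of_generic fun X hX => mul_right_cancel₀ (pow_ne_zero a hX) ?_⟩
    rw [hF X hX, map_mul, map_pow, MvPolynomial.eval_X]
    ring

/-! ### The special orthogonal group -/

/-- The first main theorem for the special orthogonal group and square matrices: `P(X) + P(XS)` and
`P(X) - P(XS)`, with `S` a reflection, are semi-invariants for the two characters. -/
theorem exists_eq_of_SO_inv {n : ℕ} {P : MvPolynomial (Fin n × Fin n) ℝ}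
    (hP : ∀ A : Matrix (Fin n) (Fin n) ℝ, Aᵀ * A = 1 → A.det = 1 → ∀ X,
      evalMat (X * A) P = evalMat X P) :
    ∃ F₀ F₁, ∀ X, evalMat X P = MvPolynomial.eval (rowGram X) F₀ +
      X.det * MvPolynomial.eval (rowGram X) F₁ := by
  obtain _ | n := n
  · exact ⟨MvPolynomial.C (evalMat 0 P), 0, fun X => by simp [Subsingleton.elim X 0]⟩
  set S : Matrix (Fin (n + 1)) (Fin (n + 1)) ℝ := bordered (Pi.single 0 (-1)) 1 with hS
  have hSorth : Sᵀ * S = 1 := bordered_orth (-1) (by simp) 1 (by simp)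
  have hSS : S * S = 1 := by
    rw [hS, bordered_mul_bordered, ← hSorth]
    ext i c
    cases i using Fin.cases <;> cases c using Fin.cases <;>
      simp [hSorth, one_apply, Fin.succ_ne_zero, (Fin.succ_ne_zero _).symm]
  have hSdet : S.det = -1 := by rw [hS, det_bordered]; simp
  set P₁ : MvPolynomial (Fin (n + 1) × Fin (n + 1)) ℝ := MvPolynomial.bind₁
    (fun p => (mvPolynomialX (Fin (n + 1)) (Fin (n + 1)) ℝ * S.map MvPolynomial.C :
      Matrix (Fin (n + 1)) (Fin (n + 1)) (MvPolynomial (Fin (n + 1) × Fin (n + 1)) ℝ)) p.1 p.2) P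
    with hP₁
  have hev : ∀ X, evalMat X P₁ = evalMat (X * S) P := fun X => by
    simp only [hP₁, evalMat, ← MvPolynomial.coe_aeval_eq_eval, RingHom.coe_coe,
      MvPolynomial.aeval_bind₁]
    congr 2
    funext p
    simp [mul_apply, MvPolynomial.aeval_def]
  have hdet : ∀ A : Matrix (Fin (n + 1)) (Fin (n + 1)) ℝ, Aᵀ * A = 1 →
      A.det = 1 ∨ A.det = -1 := fun A hA => by
    have := congrArg det hA
    rw [det_mul, det_transpose, det_one] at this
    exact mul_self_eq_one_iff.1 this
  have horth : ∀ A B : Matrix (Fin (n + 1)) (Fin (n + 1)) ℝ, Aᵀ * A = 1 → Bᵀ * B = 1 →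
      (A * B)ᵀ * (A * B) = 1 := fun A B hA hB => by
    rw [transpose_mul, Matrix.mul_assoc, ← Matrix.mul_assoc Aᵀ, hA, Matrix.one_mul, hB]
  have hrot : ∀ A : Matrix (Fin (n + 1)) (Fin (n + 1)) ℝ, Aᵀ * A = 1 → A.det = 1 → ∀ X,
      evalMat (X * A) P₁ = evalMat X P₁ := fun A hA hA1 X => by
    rw [hev, hev, ← hP (S * A * S) (horth _ _ (horth _ _ hSorth hA) hSorth)
      (by simp [hSdet, hA1]) (X * S)]
    congr 1
    rw [← Matrix.mul_assoc, ← Matrix.mul_assoc, Matrix.mul_assoc X S S, hSS, Matrix.mul_one]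
  have hrefl : ∀ A : Matrix (Fin (n + 1)) (Fin (n + 1)) ℝ, Aᵀ * A = 1 → A.det = -1 → ∀ X,
      evalMat (X * A) P₁ = evalMat X P := fun A hA hA1 X => by
    rw [hev, Matrix.mul_assoc, hP (A * S) (horth _ _ hA hSorth) (by simp [hSdet, hA1])]
  have hrefl' : ∀ A : Matrix (Fin (n + 1)) (Fin (n + 1)) ℝ, Aᵀ * A = 1 → A.det = -1 → ∀ X,
      evalMat (X * A) P = evalMat X P₁ := fun A hA hA1 X => by
    rw [hev, ← hP (S * A) (horth _ _ hSorth hA) (by simp [hSdet, hA1]) (X * S),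
      ← Matrix.mul_assoc, Matrix.mul_assoc X S S, hSS, Matrix.mul_one]
  obtain ⟨F₀, h₀⟩ := exists_eq_of_semiInv (ε := 0) (by norm_num) (P := P + P₁)
    fun A hA X => by
      rcases hdet A hA with h | h
      · rw [map_add, map_add, hP A hA h, hrot A hA h]; simp
      · rw [map_add, map_add, hrefl A hA h, hrefl' A hA h]; simp [add_comm]
  obtain ⟨F₁, h₁⟩ := exists_eq_of_semiInv (ε := 1) (by norm_num) (P := P - P₁)
    fun A hA X => by
      rcases hdet A hA with h | h
      · rw [map_sub, map_sub, hP A hA h, hrot A hA h, h]; simp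
      · rw [map_sub, map_sub, hrefl A hA h, hrefl' A hA h, h]; simp
  refine ⟨MvPolynomial.C 2⁻¹ * F₀, MvPolynomial.C 2⁻¹ * F₁, fun X => ?_⟩
  have h₀ := h₀ X
  have h₁ := h₁ X
  rw [map_add] at h₀
  rw [map_sub] at h₁
  simp only [map_mul, MvPolynomial.eval_C]
  linear_combination (h₀ + h₁) / 2

/-- First main theorem of invariant theory for `SO(N)`: every polynomial in the
coordinates of `m` vectors `x₁,…,x_m ∈ ℝ^N` that is invariant under the diagonal
action of `SO(N)` lies in the subalgebra generated by the inner products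
`(x_k, x_l)` for `k ≤ l`, together with — when `m = N` — the determinant
`det [x₁,…,x_N]`. -/
theorem firstMainTheorem_SO (N m : ℕ) (hm : 1 ≤ m) (hmN : m ≤ N)
    (P : MvPolynomial (Fin m × Fin N) ℝ)
    (hinv : ∀ A : Matrix (Fin N) (Fin N) ℝ, Aᵀ * A = 1 → A.det = 1 →
      ∀ x : Fin m → Fin N → ℝ,
        MvPolynomial.eval (fun p : Fin m × Fin N => A.mulVec (x p.1) p.2) P =
        MvPolynomial.eval (fun p : Fin m × Fin N => x p.1 p.2) P) :
    (fun x : Fin m → Fin N → ℝ => MvPolynomial.eval (fun p : Fin m × Fin N => x p.1 p.2) P) ∈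
      Algebra.adjoin ℝ
        (({f | ∃ k l : Fin m, k ≤ l ∧ f = fun x : Fin m → Fin N → ℝ =>
            ∑ i : Fin N, x k i * x l i} : Set ((Fin m → Fin N → ℝ) → ℝ)) ∪
         {f | ∃ h : m = N, f = fun x : Fin m → Fin N → ℝ =>
            (Matrix.of fun i j : Fin N => x (Fin.cast h.symm j) i).det}) := by
  set ι : Fin m → Fin N := Fin.castLE hmN with hι
  have hren : ∀ X : Matrix (Fin N) (Fin N) ℝ, evalMat X (MvPolynomial.rename (Prod.map ι id) P) =
      MvPolynomial.eval (fun p : Fin m × Fin N => X (ι p.1) p.2) P := fun X => by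
    simp only [evalMat, MvPolynomial.eval_rename]; rfl
  obtain ⟨F₀, F₁, hF⟩ := exists_eq_of_SO_inv (P := MvPolynomial.rename (Prod.map ι id) P)
    fun A hA hdet X => by
      rw [hren, hren]
      refine Eq.trans ?_ (hinv Aᵀ (by rw [transpose_transpose]; exact mul_eq_one_comm.1 hA)
        (by rwa [det_transpose]) fun k c => X (ι k) c)
      congr 2
      funext p
      simp [mul_apply, mulVec, dotProduct, mul_comm]
  -- `Z x` has the rows `x₁, …, x_m, 0, …, 0`.
  set Z : (Fin m → Fin N → ℝ) → Matrix (Fin N) (Fin N) ℝ :=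
    fun x => Matrix.of fun i c => if h : i.1 < m then x ⟨i.1, h⟩ c else 0 with hZ
  have hP : (fun x : Fin m → Fin N → ℝ =>
      MvPolynomial.eval (fun p : Fin m × Fin N => x p.1 p.2) P) =
      (fun x => MvPolynomial.eval (rowGram (Z x)) F₀) +
        (fun x => (Z x).det) * (fun x => MvPolynomial.eval (rowGram (Z x)) F₁) := by
    funext x
    rw [Pi.add_apply, Pi.mul_apply, ← hF, hren]
    simp [hZ, hι]
  rw [hP]
  set S := Algebra.adjoin ℝ
        (({f | ∃ k l : Fin m, k ≤ l ∧ f = fun x : Fin m → Fin N → ℝ =>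
            ∑ i : Fin N, x k i * x l i} : Set ((Fin m → Fin N → ℝ) → ℝ)) ∪
         {f | ∃ h : m = N, f = fun x : Fin m → Fin N → ℝ =>
            (Matrix.of fun i j : Fin N => x (Fin.cast h.symm j) i).det}) with hS
  have hgram : ∀ e, (fun x => rowGram (Z x) e) ∈ S := fun e => by
    induction e with
    | _ i j =>
      by_cases hij : i.1 < m ∧ j.1 < m
      · obtain ⟨hi, hj⟩ := hij
        refine Algebra.subset_adjoin (Or.inl ?_)
        rcases le_total i j with h | h
        · exact ⟨⟨i, hi⟩, ⟨j, hj⟩, h, by funext x; simp [rowGram_mk, hZ, hi, hj]⟩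
        · exact ⟨⟨j, hj⟩, ⟨i, hi⟩, h, by funext x; simp [rowGram_mk, hZ, hi, hj, mul_comm]⟩
      · have : (fun x => rowGram (Z x) s(i, j)) = 0 := by
          funext x
          rw [not_and_or] at hij
          rcases hij with h | h <;> simp [rowGram_mk, hZ, h]
        rw [this]
        exact zero_mem S
  have hdet : (fun x => (Z x).det) ∈ S := by
    rcases hmN.eq_or_lt with h | h
    · refine Algebra.subset_adjoin (Or.inr ⟨h, ?_⟩)
      funext x
      rw [← det_transpose]
      congr 1
      ext i j
      have hj : j.1 < m := h ▸ j.2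
      simp only [hZ, transpose_apply, of_apply, hj, dif_pos]
      rfl
    · have : (fun x => (Z x).det) = 0 := by
        funext x
        exact det_eq_zero_of_row_eq_zero ⟨m, h⟩ fun c => by simp [hZ]
      rw [this]
      exact zero_mem S
  exact add_mem (eval_mem_subalgebra S _ hgram F₀)
    (mul_mem hdet (eval_mem_subalgebra S _ hgram F₁))
end
end
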